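/- Let m ≥ 2, λ > 0, and let t₁, ..., t_m ∈ ℝ be λ-spread for a positive integer n, i.e., ‖(t_r ± t_{r'})/(2π n)‖_{ℝ/ℤ} ≥ λ/n for all 1 ≤ r < r' ≤ m and both choices of sign. Let λ ≤ K = o(n). Then there exists an integer L with L ≍ n/K (i.e., c₁ n/K ≤ L ≤ c₂ n/K for constants depending only on m) such that ‖L(t_r ± t_{r'})/(2π n)‖_{ℝ/ℤ} ≥ c(m) λ/K for all 1 ≤ r < r' ≤ m and both signs, where c(m) > 0 depends only on m. -/

import Mathlib

/-- Distance from a real number to the nearest integer. -/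
noncomputable def dist01 (x : ℝ) : ℝ := |x - round x|


/-!
Simultaneous Dirichlet approximation gives a bounded `D` for which every `D * θ j` is close to an
integer, and the dilation is sought among `L = 1 + D * l` with `l ∈ [Y, 2Y)`, where `Y` is of
order `n / K`. If `‖D * θ j‖` is at least a small multiple of `1 / Y`, then
`L * θ j = θ j + l * (D * θ j)` is a progression with small step winding a definite amount around
the circle, so it is close to `0` for only a small proportion of `l`; a union bound gives one `l`
that works for all these `j`. Otherwise `θ j` is so close to some `z / D` that the error stays
small under dilation by `L`, while `L ≡ 1 [ZMOD D]` fixes `z / D` modulo `1`. Then `L * θ j` stays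
at distance of order `1 / D` from the integers if `D ∤ z`, and `‖L * θ j‖ = L * ‖θ j‖` if `D ∣ z`.
-/

section Dist01

lemma dist01_nonneg (x : ℝ) : 0 ≤ dist01 x := abs_nonneg _

lemma dist01_add_intCast (x : ℝ) (z : ℤ) : dist01 (x + z) = dist01 x := by
  simp [dist01]

lemma dist01_le_abs_sub_intCast (x : ℝ) (z : ℤ) : dist01 x ≤ |x - z| := round_le x z

lemma dist01_eq_abs {x : ℝ} (hx : |x| ≤ 1 / 2) : dist01 x = |x| := by
  rw [dist01, ← UnitAddCircle.norm_eq, AddCircle.norm_coe_eq_abs_iff 1 one_ne_zero, abs_one]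
  exact hx

lemma dist01_sub_abs_le_dist01_add (x y : ℝ) : dist01 x - |y| ≤ dist01 (x + y) := by
  rw [sub_le_iff_le_add]
  calc dist01 x ≤ |x - round (x + y)| := dist01_le_abs_sub_intCast _ _
    _ = |(x + y - round (x + y)) - y| := by ring_nf
    _ ≤ dist01 (x + y) + |y| := abs_sub _ _

lemma inv_le_dist01_intCast_div {z : ℤ} {D : ℕ} (hD : 0 < D) (hz : ¬ (D : ℤ) ∣ z) :
    (D : ℝ)⁻¹ ≤ dist01 (z / D) := by
  have hD' : (0 : ℝ) < D := Nat.cast_pos.2 hD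
  set w := round ((z : ℝ) / D)
  have hne : z - D * w ≠ 0 := fun h ↦ hz ⟨w, sub_eq_zero.1 h⟩
  have hone : (1 : ℝ) ≤ |(z : ℝ) - D * w| := mod_cast Int.one_le_abs hne
  calc (D : ℝ)⁻¹ ≤ |(z : ℝ) - D * w| / D := by rw [inv_eq_one_div]; gcongr
    _ = |((z : ℝ) - D * w) / D| := by rw [abs_div, Nat.abs_cast]
    _ = dist01 (z / D) := by rw [dist01, sub_div, mul_div_cancel_left₀ _ hD'.ne']

end Dist01

lemma exists_dist01_natCast_mul_le {ι : Type*} [Fintype ι] (θ : ι → ℝ) {k : ℕ} (hk : 0 < k) :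
    ∃ D : ℕ, 0 < D ∧ D ≤ k ^ Fintype.card ι ∧ ∀ j, dist01 (D * θ j) ≤ (k : ℝ)⁻¹ := by
  classical
  have hk' : (0 : ℝ) < k := Nat.cast_pos.2 hk
  let box (a : ℕ) (j : ι) : ℤ := ⌊Int.fract (a * θ j) * k⌋
  have hbox (a : ℕ) : box a ∈ Fintype.piFinset fun _ : ι ↦ Finset.Ico (0 : ℤ) k := by
    refine Fintype.mem_piFinset.2 fun j ↦ Finset.mem_Ico.2 ⟨?_, Int.floor_lt.2 ?_⟩
    · exact Int.floor_nonneg.2 (mul_nonneg (Int.fract_nonneg _) hk'.le)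
    · simpa using mul_lt_mul_of_pos_right (Int.fract_lt_one (a * θ j)) hk'
  obtain ⟨a, ha, b, hb, hab, heq⟩ : ∃ a ∈ Finset.range (k ^ Fintype.card ι + 1),
      ∃ b ∈ Finset.range (k ^ Fintype.card ι + 1), a ≠ b ∧ box a = box b :=
    Finset.exists_ne_map_eq_of_card_lt_of_maps_to (by simp) fun a _ ↦ hbox a
  wlog hlt : a < b generalizing a b
  · exact this b hb a ha hab.symm heq.symm (hab.lt_or_gt.resolve_left hlt)
  rw [Finset.mem_range] at hb
  refine ⟨b - a, by lia, by lia, fun j ↦ ?_⟩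
  have hclose : |Int.fract (b * θ j) * k - Int.fract (a * θ j) * k| < 1 :=
    Int.abs_sub_lt_one_of_floor_eq_floor (congrFun heq.symm j)
  calc dist01 ((b - a : ℕ) * θ j)
      ≤ |(b - a : ℕ) * θ j - (⌊b * θ j⌋ - ⌊a * θ j⌋ : ℤ)| := dist01_le_abs_sub_intCast _ _
    _ = |Int.fract (b * θ j) - Int.fract (a * θ j)| := by
      rw [Nat.cast_sub hlt.le, Int.cast_sub, Int.fract, Int.fract]
      ring_nf
    _ ≤ (k : ℝ)⁻¹ := by
      rw [← sub_mul, abs_mul, Nat.abs_cast] at hclose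
      rw [← one_div, le_div_iff₀ hk']
      exact hclose.le

lemma card_le_of_forall_abs_sub_le {S : Finset ℤ} {d : ℝ} (hd : 0 ≤ d)
    (h : ∀ x ∈ S, ∀ y ∈ S, |(x : ℝ) - y| ≤ d) : (S.card : ℝ) ≤ d + 1 := by
  rcases S.eq_empty_or_nonempty with rfl | hS
  · simpa using hd.trans (le_add_of_nonneg_right zero_le_one)
  have hsub : S ⊆ Finset.Icc (S.min' hS) (S.max' hS) := fun x hx ↦
    Finset.mem_Icc.2 ⟨S.min'_le x hx, S.le_max' x hx⟩
  have hcard : (S.card : ℤ) ≤ S.max' hS - S.min' hS + 1 := by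
    have hle := Finset.card_le_card hsub
    have hmin := S.min'_le _ (S.max'_mem hS)
    rw [Int.card_Icc] at hle
    lia
  calc (S.card : ℝ) ≤ S.max' hS - S.min' hS + 1 := mod_cast hcard
    _ ≤ d + 1 := by
      gcongr
      exact (le_abs_self _).trans (h _ (S.max'_mem hS) _ (S.min'_mem hS))

/-- The integers `l` in the window `[a, a + Y)` at which the progression `α + l * β` comes within
`κ` of an integer. -/
noncomputable def nearInt (α β κ : ℝ) (a : ℤ) (Y : ℕ) : Finset ℤ :=
  {l ∈ Finset.Ico a (a + Y) | dist01 (α + l * β) < κ}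

section NearInt

variable {α β κ : ℝ} {a : ℤ} {Y : ℕ}

lemma mem_nearInt {l : ℤ} :
    l ∈ nearInt α β κ a Y ↔ l ∈ Finset.Ico a (a + Y) ∧ dist01 (α + l * β) < κ :=
  Finset.mem_filter

lemma nearInt_sub_intCast (z : ℤ) : nearInt α (β - z) κ a Y = nearInt α β κ a Y := by
  refine Finset.filter_congr fun l _ ↦ ?_
  rw [← dist01_add_intCast (α + l * (β - z)) (l * z)]
  push_cast
  ring_nf

lemma card_filter_nearInt_round_eq_le (hβ : β ≠ 0) (hκ : 0 ≤ κ) (w : ℤ) :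
    (({l ∈ nearInt α β κ a Y | round (α + l * β) = w} : Finset ℤ).card : ℝ)
      ≤ 2 * κ / |β| + 1 := by
  refine card_le_of_forall_abs_sub_le (by positivity) fun x hx y hy ↦ ?_
  have hnear {l : ℤ} (hl : l ∈ ({l ∈ nearInt α β κ a Y | round (α + l * β) = w} : Finset ℤ)) :
      |α + l * β - w| < κ := by
    obtain ⟨hl, hw⟩ := Finset.mem_filter.1 hl
    exact hw ▸ (mem_nearInt.1 hl).2
  rw [le_div_iff₀ (abs_pos.2 hβ), ← abs_mul]
  calc |((x : ℝ) - y) * β| = |(α + x * β - w) - (α + y * β - w)| := by ring_nf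
    _ ≤ |α + x * β - w| + |α + y * β - w| := abs_sub _ _
    _ ≤ 2 * κ := by linarith [hnear hx, hnear hy]

lemma card_image_nearInt_round_le :
    (((nearInt α β κ a Y).image fun l : ℤ ↦ round (α + l * β)).card : ℝ) ≤ |β| * Y + 2 := by
  have hbound := card_le_of_forall_abs_sub_le (d := |β| * Y + 1)
    (S := (nearInt α β κ a Y).image fun l : ℤ ↦ round (α + l * β)) (by positivity) ?_
  · linarith
  simp only [Finset.forall_mem_image, mem_nearInt, Finset.mem_Ico]
  rintro x ⟨⟨hax, hxY⟩, -⟩ y ⟨⟨hay, hyY⟩, -⟩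
  have hxy : |(x : ℝ) - y| ≤ Y := mod_cast (abs_sub_le_iff.2 ⟨by lia, by lia⟩ : |x - y| ≤ Y)
  have hmul : |((x : ℝ) - y) * β| ≤ |β| * Y := by
    rw [abs_mul, mul_comm]
    gcongr
  have hx := abs_le.1 (abs_sub_round (α + x * β))
  have hy := abs_le.1 (abs_sub_round (α + y * β))
  rw [abs_le] at hmul ⊢
  constructor <;> linarith

lemma card_nearInt_le (hβ : dist01 β ≠ 0) (hκ : 0 ≤ κ) :
    ((nearInt α β κ a Y).card : ℝ) ≤ (2 * κ / dist01 β + 1) * (dist01 β * Y + 2) := by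
  have hcard (η : ℝ) (hη : η ≠ 0) :
      ((nearInt α η κ a Y).card : ℝ) ≤ (2 * κ / |η| + 1) * (|η| * Y + 2) := by
    rw [Finset.card_eq_sum_card_image fun l : ℤ ↦ round (α + l * η), Nat.cast_sum]
    calc _ ≤ _ := Finset.sum_le_card_nsmul _ _ _ fun w _ ↦ card_filter_nearInt_round_eq_le hη hκ w
      _ ≤ _ := by
        rw [nsmul_eq_mul, mul_comm]
        gcongr
        exact card_image_nearInt_round_le
  rw [← nearInt_sub_intCast (round β)]
  exact hcard _ (abs_ne_zero.1 hβ)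

lemma card_nearInt_le_four_mul_div {ε k : ℝ} (hε : 0 < ε) (hε2 : ε ≤ 2) (hk : 0 < k)
    (hY : 2 * k ≤ Y) (hβk : dist01 β ≤ k⁻¹) (hβY : ε ≤ dist01 β * Y) :
    ((nearInt α β (ε / (4 * k)) a Y).card : ℝ) ≤ 4 * (Y / k) := by
  have hβ : 0 < dist01 β := pos_of_mul_pos_left (hε.trans_le hβY) Y.cast_nonneg
  have h₁ : ε / 2 * (Y / k) ≤ Y / k := mul_le_of_le_one_left (by positivity) (by linarith)
  have h₂ : dist01 β * Y ≤ Y / k := by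
    rw [← inv_mul_eq_div]
    gcongr
  have h₃ : ε / dist01 β / k ≤ Y / k := by
    gcongr
    rwa [div_le_iff₀' hβ]
  have h₄ : 2 ≤ Y / k := (le_div_iff₀ hk).2 hY
  calc ((nearInt α β (ε / (4 * k)) a Y).card : ℝ)
      ≤ (2 * (ε / (4 * k)) / dist01 β + 1) * (dist01 β * Y + 2) :=
        card_nearInt_le hβ.ne' (by positivity)
    _ = ε / 2 * (Y / k) + dist01 β * Y + ε / dist01 β / k + 2 := by field_simp; ring
    _ ≤ 4 * (Y / k) := by linarith

end NearInt

lemma exists_forall_le_dist01_add_mul {ι : Type*} [Fintype ι] (α β : ι → ℝ) {ε k : ℝ} (a : ℤ)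
    {Y : ℕ} (hε : 0 < ε) (hε2 : ε ≤ 2) (hk : 4 * Fintype.card ι < k) (hY : 2 * k ≤ Y)
    (hβ : ∀ j, dist01 (β j) ≤ k⁻¹) :
    ∃ l ∈ Finset.Ico a (a + Y),
      ∀ j, ε ≤ dist01 (β j) * Y → ε / (4 * k) ≤ dist01 (α j + l * β j) := by
  classical
  let s : Finset ι := {j | ε ≤ dist01 (β j) * Y}
  let bad := s.biUnion fun j ↦ nearInt (α j) (β j) (ε / (4 * k)) a Y
  have hk0 : 0 < k := lt_of_le_of_lt (by positivity) hk
  have hbad : (bad.card : ℝ) < Y :=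
    calc (bad.card : ℝ) ≤ ∑ j ∈ s, ((nearInt (α j) (β j) (ε / (4 * k)) a Y).card : ℝ) :=
          mod_cast Finset.card_biUnion_le
      _ ≤ s.card • (4 * (Y / k)) := Finset.sum_le_card_nsmul _ _ _ fun j hj ↦
          card_nearInt_le_four_mul_div hε hε2 hk0 hY (hβ j) (Finset.mem_filter.1 hj).2
      _ ≤ Fintype.card ι * (4 * (Y / k)) := by
          rw [nsmul_eq_mul]
          gcongr
          exact s.card_le_univ
      _ = 4 * Fintype.card ι / k * Y := by ring
      _ < Y := mul_lt_of_lt_one_left (by linarith) ((div_lt_one hk0).2 hk)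
  obtain ⟨l, hl, hlbad⟩ : ∃ l ∈ Finset.Ico a (a + Y), l ∉ bad :=
    Finset.exists_mem_notMem_of_card_lt_card (by simpa using hbad)
  refine ⟨l, hl, fun j hj ↦ not_lt.1 fun hlt ↦ hlbad ?_⟩
  exact Finset.mem_biUnion.2
    ⟨j, Finset.mem_filter.2 ⟨Finset.mem_univ j, hj⟩, mem_nearInt.2 ⟨hl, hlt⟩⟩

lemma dist01_mul_eq_of_modEq_one {D : ℕ} (hD : 0 < D) {L : ℤ} (hL : L ≡ 1 [ZMOD D]) (θ : ℝ)
    (z : ℤ) : dist01 (L * θ) = dist01 (z / D + L * (D * θ - z) / D) := by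
  obtain ⟨l, hl⟩ : (D : ℤ) ∣ L - 1 := hL.symm.dvd
  have hL' : (L : ℝ) = 1 + D * l := mod_cast eq_add_of_sub_eq' hl
  rw [← dist01_add_intCast (z / D + _) (l * z), hL']
  congr 1
  push_cast
  field_simp
  ring

lemma min_le_dist01_mul_of_modEq_one {D : ℕ} (hD : 0 < D) {L : ℤ} (hL : L ≡ 1 [ZMOD D]) {θ : ℝ}
    (hθ : |(L : ℝ)| * dist01 (D * θ) ≤ 1 / 2) :
    min (2 * D : ℝ)⁻¹ (|(L : ℝ)| * dist01 θ) ≤ dist01 (L * θ) := by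
  have hD' : (1 : ℝ) ≤ D := mod_cast hD
  set z := round (D * θ)
  have hsmall : |L * (D * θ - z) / D| ≤ (2 * D : ℝ)⁻¹ := by
    rw [abs_div, abs_mul, Nat.abs_cast, mul_inv, ← div_eq_mul_inv, inv_eq_one_div]
    gcongr
    exact hθ
  rw [dist01_mul_eq_of_modEq_one hD hL θ z]
  by_cases hdvd : (D : ℤ) ∣ z
  · obtain ⟨w, hw⟩ := hdvd
    have hzw : (z : ℝ) / D = w := by rw [hw]; push_cast; field_simp
    have hhalf : (2 * D : ℝ)⁻¹ ≤ 1 / 2 := by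
      rw [one_div]
      gcongr
      linarith
    rw [hzw, add_comm, dist01_add_intCast, dist01_eq_abs (hsmall.trans hhalf)]
    calc min (2 * D : ℝ)⁻¹ (|(L : ℝ)| * dist01 θ) ≤ |(L : ℝ)| * dist01 θ := min_le_right _ _
      _ ≤ |(L : ℝ)| * |θ - w| := by gcongr; exact dist01_le_abs_sub_intCast θ w
      _ = |L * (D * θ - z) / D| := by rw [← abs_mul, ← hzw]; field_simp
  · calc min (2 * D : ℝ)⁻¹ (|(L : ℝ)| * dist01 θ) ≤ (2 * D : ℝ)⁻¹ := min_le_left _ _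
      _ = (D : ℝ)⁻¹ - (2 * D : ℝ)⁻¹ := by field_simp; norm_num
      _ ≤ dist01 (z / D) - |L * (D * θ - z) / D| :=
        sub_le_sub (inv_le_dist01_intCast_div hD hdvd) hsmall
      _ ≤ dist01 (z / D + L * (D * θ - z) / D) := dist01_sub_abs_le_dist01_add _ _

section Dilate

variable {ι : Type*} [Fintype ι]

lemma exists_modEq_one_forall_small_or_le_dist01_mul (θ : ι → ℝ) {D Y : ℕ} {k : ℝ} (hD : 0 < D)
    (hk : 4 * Fintype.card ι < k) (hY : 2 * k ≤ Y) (hθ : ∀ j, dist01 (D * θ j) ≤ k⁻¹) :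
    ∃ L : ℤ, L ≡ 1 [ZMOD D] ∧ (Y : ℝ) ≤ L ∧ (L : ℝ) ≤ 2 * D * Y ∧
      ∀ j, L * dist01 (D * θ j) ≤ 1 / 2 ∨ (16 * D * k : ℝ)⁻¹ ≤ dist01 (L * θ j) := by
  have hD1 : (1 : ℝ) ≤ D := mod_cast hD
  have hε : (4 * D : ℝ)⁻¹ ≤ 2 := (inv_le_one_of_one_le₀ (by linarith)).trans one_le_two
  obtain ⟨l, hl, hgeneric⟩ :=
    exists_forall_le_dist01_add_mul θ (fun j ↦ D * θ j) Y (by positivity) hε hk hY hθ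
  obtain ⟨hYl, hlY⟩ : (Y : ℝ) ≤ l ∧ (l : ℝ) + 1 ≤ Y + Y := mod_cast Finset.mem_Ico.1 hl
  have hYL : (Y : ℝ) ≤ 1 + D * l := by nlinarith [(Y.cast_nonneg : (0 : ℝ) ≤ Y)]
  have hLY : (1 + D * l : ℝ) ≤ 2 * D * Y := by nlinarith
  refine ⟨1 + D * l, by simp [Int.ModEq], mod_cast hYL, mod_cast hLY, fun j ↦ ?_⟩
  push_cast
  refine (le_or_gt (4 * D : ℝ)⁻¹ (dist01 (D * θ j) * Y)).symm.imp (fun hj ↦ ?_) fun hj ↦ ?_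
  · have hnonneg := dist01_nonneg (D * θ j)
    calc (1 + D * l) * dist01 (D * θ j) ≤ 2 * D * Y * dist01 (D * θ j) := by gcongr
      _ = 2 * D * (dist01 (D * θ j) * Y) := by ring
      _ ≤ 2 * D * (4 * D : ℝ)⁻¹ := by gcongr
      _ = 1 / 2 := by field_simp; norm_num
  · calc (16 * D * k : ℝ)⁻¹ = (4 * D : ℝ)⁻¹ / (4 * k) := by field_simp; norm_num
      _ ≤ dist01 (θ j + l * (D * θ j)) := hgeneric j hj
      _ = dist01 ((1 + D * l) * θ j) := by ring_nf

lemma exists_int_mul_min_le_dist01_mul (θ : ι → ℝ) {k Y : ℕ} (hk : 4 * Fintype.card ι < k)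
    (hY : 2 * k ≤ Y) :
    ∃ L : ℤ, (Y : ℝ) ≤ L ∧ (L : ℝ) ≤ 2 * k ^ Fintype.card ι * Y ∧
      ∀ j, (16 * k ^ Fintype.card ι * k : ℝ)⁻¹ * min 1 (Y * dist01 (θ j)) ≤
        dist01 (L * θ j) := by
  obtain ⟨D, hD, hDk, hDθ⟩ := exists_dist01_natCast_mul_le θ (Nat.zero_lt_of_lt hk)
  obtain ⟨L, hL1, hYL, hLY, hL⟩ := exists_modEq_one_forall_small_or_le_dist01_mul θ hD
    (mod_cast hk) (mod_cast hY) hDθ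
  have hDR : (D : ℝ) ≤ k ^ Fintype.card ι := mod_cast hDk
  have hD1 : (1 : ℝ) ≤ D := mod_cast hD
  have hk1 : (1 : ℝ) ≤ k := mod_cast Nat.one_le_of_lt hk
  refine ⟨L, hYL, hLY.trans (by gcongr), fun j ↦ ?_⟩
  have hnonneg := dist01_nonneg (θ j)
  have hmin : (16 * D * k : ℝ)⁻¹ * min 1 (Y * dist01 (θ j)) ≤ (16 * D * k : ℝ)⁻¹ :=
    mul_le_of_le_one_right (by positivity) (min_le_left _ _)
  calc (16 * k ^ Fintype.card ι * k : ℝ)⁻¹ * min 1 (Y * dist01 (θ j))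
      ≤ (16 * D * k : ℝ)⁻¹ * min 1 (Y * dist01 (θ j)) := by gcongr
    _ ≤ dist01 (L * θ j) := ?_
  rcases hL j with hsmall | hlarge
  · have habs : |(L : ℝ)| = L := abs_of_nonneg (Y.cast_nonneg.trans hYL)
    refine le_trans (le_min ?_ ?_) (min_le_dist01_mul_of_modEq_one hD hL1 (by rwa [habs]))
    · exact hmin.trans (inv_anti₀ (by positivity) (by nlinarith))
    · calc (16 * D * k : ℝ)⁻¹ * min 1 (Y * dist01 (θ j)) ≤ min 1 (Y * dist01 (θ j)) :=
            mul_le_of_le_one_left (by positivity) (inv_le_one_of_one_le₀ (by nlinarith))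
        _ ≤ Y * dist01 (θ j) := min_le_right _ _
        _ ≤ |(L : ℝ)| * dist01 (θ j) := by rw [habs]; gcongr
  · exact hmin.trans hlarge

end Dilate

theorem stmt19_general (ι : Type*) [Finite ι] :
    ∃ C c : ℝ, 0 < C ∧ 0 < c ∧ ∀ (n K lam : ℝ) (θ : ι → ℝ), 0 < lam → lam ≤ K → K ≤ n →
      (∀ j, lam / n ≤ dist01 (θ j)) →
        ∃ L : ℤ, n / K ≤ L ∧ (L : ℝ) ≤ C * n / K ∧ ∀ j, c * lam / K ≤ dist01 (L * θ j) := by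
  cases nonempty_fintype ι
  set k := 4 * Fintype.card ι + 1
  refine ⟨2 * k ^ Fintype.card ι * (4 * k), (16 * k ^ Fintype.card ι * k : ℝ)⁻¹,
    by positivity, by positivity, fun n K lam θ hlam hlamK hKn hθ ↦ ?_⟩
  have hK : 0 < K := hlam.trans_le hlamK
  have hn : 0 < n := hK.trans_le hKn
  have hX : 1 ≤ n / K := (one_le_div hK).2 hKn
  set Y := 2 * k * ⌈n / K⌉₊
  have hkY : 2 * k ≤ Y := Nat.le_mul_of_pos_right _ (Nat.ceil_pos.2 (by positivity))
  have hXY : n / K ≤ Y := (Nat.le_ceil _).trans (mod_cast Nat.le_mul_of_pos_left _ (by positivity))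
  have hYX : (Y : ℝ) ≤ 4 * k * (n / K) :=
    calc (Y : ℝ) = 2 * k * ⌈n / K⌉₊ := by push_cast [Y]; rfl
      _ ≤ 2 * k * (2 * (n / K)) := by
        gcongr
        linarith [Nat.ceil_lt_add_one (zero_le_one.trans hX)]
      _ = 4 * k * (n / K) := by ring
  obtain ⟨L, hYL, hLY, hLθ⟩ := exists_int_mul_min_le_dist01_mul θ (by lia) hkY
  refine ⟨L, hXY.trans hYL, ?_, fun j ↦ le_trans ?_ (hLθ j)⟩
  · calc (L : ℝ) ≤ 2 * k ^ Fintype.card ι * Y := hLY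
      _ ≤ 2 * k ^ Fintype.card ι * (4 * k * (n / K)) := by gcongr
      _ = _ := by ring
  · rw [mul_div_assoc]
    gcongr
    refine le_min ((div_le_one hK).2 hlamK) ?_
    calc lam / K = n / K * (lam / n) := by field_simp
      _ ≤ Y * dist01 (θ j) := by gcongr; exact hθ j

/-- If (t₁,...,t_m) is λ-spread and λ ≤ K with K small compared to n
(K = o(n)), then there is an integer L ≍ n/K with
‖L(t_r ± t_{r'})/(2πn)‖_{ℝ/ℤ} ≥ c(m) λ/K for all r < r' and both signs. -/
theorem stmt19 (m : ℕ) (hm : 2 ≤ m) :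
    ∃ c₁ c₂ c₃ ε : ℝ, 0 < c₁ ∧ 0 < c₂ ∧ 0 < c₃ ∧ 0 < ε ∧
      ∀ (n : ℕ), 0 < n → ∀ (K lam : ℝ) (t : Fin m → ℝ),
        0 < lam → lam ≤ K → K ≤ ε * n →
        (∀ r r' : Fin m, r < r' →
          lam / n ≤ dist01 ((t r - t r') / (2 * Real.pi * n)) ∧
          lam / n ≤ dist01 ((t r + t r') / (2 * Real.pi * n))) →
        ∃ L : ℤ, c₁ * n / K ≤ (L : ℝ) ∧ (L : ℝ) ≤ c₂ * n / K ∧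
          ∀ r r' : Fin m, r < r' →
            c₃ * lam / K ≤ dist01 ((L : ℝ) * (t r - t r') / (2 * Real.pi * n)) ∧
            c₃ * lam / K ≤ dist01 ((L : ℝ) * (t r + t r') / (2 * Real.pi * n)) := by
  obtain ⟨C, c, hC, hc, H⟩ := stmt19_general
    ({p : Fin m × Fin m // p.1 < p.2} ⊕ {p : Fin m × Fin m // p.1 < p.2})
  refine ⟨1, C, c, 1, one_pos, hC, hc, one_pos, fun n _ K lam t hlam hlamK hKn hspread ↦ ?_⟩
  simpa [mul_div_assoc, forall_and] using H n K lam
    (Sum.elim (fun p ↦ (t p.1.1 - t p.1.2) / (2 * Real.pi * n))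
      (fun p ↦ (t p.1.1 + t p.1.2) / (2 * Real.pi * n)))
    hlam hlamK (by simpa using hKn) (by simpa [forall_and] using hspread)
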